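/- Let U ⊆ ℂ be a nonempty open connected set, and let f, g : ℂ → ℂ be complex analytic on a neighborhood of each point of U, with deriv f z ≠ 0 and deriv g z ≠ 0 for all z ∈ U. If f and g have equal Schwarzian derivatives on U, i.e. Sf(z) = Sg(z) for all z ∈ U, then g differs from f by post-composition with a Möbius transformation: there exist a, b, c, d ∈ ℂ with a·d − b·c ≠ 0 such that for every z ∈ U, c·f(z) + d ≠ 0 and g(z) = (a·f(z) + b)/(c·f(z) + d). -/

import Mathlib

/-!
Put `N = f'' g' - g'' f'`. After clearing denominators, `Sf = Sg` becomes the linear equation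
`2 f' g' N' = 3 N (f'' g' + g'' f')`, which says that `N² / (f' g')³` has zero derivative, so on
the connected set `U` it is a constant `K`.

If `K = 0`, then `N = 0` on `U`, so `g' / f'` is constant and `g` is an affine function of `f`.

If `K ≠ 0`, then `N` has no zero on `U`. The same equation shows that `f - 2 f'² g' / N` and
`g + 2 g'² f' / N` are constants `p` and `q`; these are the pole of the Möbius map and its value
at infinity. Multiplying gives `(f - p) (g - q) = -4 / K`, which is the required relation. Working
with rational expressions in the derivatives avoids square roots of `f'`, which need not exist on
a domain that is not simply connected.
-/

/-- The Schwarzian derivative of `f` at `z`: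
`Sf(z) = f'''(z)/f'(z) − (3/2)·(f''(z)/f'(z))²`. -/
noncomputable def schwarzian (f : ℂ → ℂ) (z : ℂ) : ℂ :=
  deriv (deriv (deriv f)) z / deriv f z - (3 / 2) * (deriv (deriv f) z / deriv f z) ^ 2

lemma exists_const_of_hasDerivAt_zero {U : Set ℂ} (hU : IsOpen U) (hUc : IsConnected U)
    {F : ℂ → ℂ} (hF : ∀ z ∈ U, HasDerivAt F 0 z) : ∃ k, ∀ z ∈ U, F z = k :=
  hU.exists_is_const_of_deriv_eq_zero hUc.isPreconnected
    (fun z hz => (hF z hz).differentiableAt.differentiableWithinAt)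
    (fun z hz => (hF z hz).deriv)

/-- The equation `Sf = Sg` with denominators cleared, as a first-order linear equation for
`N = f'' g' - g'' f'`. -/
lemma schwarzian_eq_cleared {f g : ℂ → ℂ} {z : ℂ} (hf' : deriv f z ≠ 0) (hg' : deriv g z ≠ 0)
    (hS : schwarzian f z = schwarzian g z) :
    2 * (deriv f z * deriv g z) *
        (deriv (deriv (deriv f)) z * deriv g z - deriv (deriv (deriv g)) z * deriv f z) =
      3 * (deriv (deriv f) z * deriv g z - deriv (deriv g) z * deriv f z) *
        (deriv (deriv f) z * deriv g z + deriv (deriv g) z * deriv f z) := by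
  unfold schwarzian at hS
  field_simp at hS
  linear_combination hS

/-- Two locally injective holomorphic functions on a connected open set with equal
Schwarzian derivatives differ by post-composition with a Möbius transformation. -/
theorem eq_schwarzian_iff_mobius (U : Set ℂ) (hU : IsOpen U) (hUc : IsConnected U)
    (f g : ℂ → ℂ) (hf : AnalyticOnNhd ℂ f U) (hg : AnalyticOnNhd ℂ g U)
    (hf' : ∀ z ∈ U, deriv f z ≠ 0) (hg' : ∀ z ∈ U, deriv g z ≠ 0)
    (hS : ∀ z ∈ U, schwarzian f z = schwarzian g z) :
    ∃ a b c d : ℂ, a * d - b * c ≠ 0 ∧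
      ∀ z ∈ U, c * f z + d ≠ 0 ∧ g z = (a * f z + b) / (c * f z + d) := by
  have hR := fun z hz => schwarzian_eq_cleared (hf' z hz) (hg' z hz) (hS z hz)
  have df1 := fun z hz => (hf z hz).differentiableAt.hasDerivAt
  have dg1 := fun z hz => (hg z hz).differentiableAt.hasDerivAt
  have df2 := fun z hz => (hf z hz).deriv.differentiableAt.hasDerivAt
  have dg2 := fun z hz => (hg z hz).deriv.differentiableAt.hasDerivAt
  have df3 := fun z hz => (hf z hz).deriv.deriv.differentiableAt.hasDerivAt
  have dg3 := fun z hz => (hg z hz).deriv.deriv.differentiableAt.hasDerivAt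
  set f1 := deriv f
  set g1 := deriv g
  set f2 := deriv f1
  set g2 := deriv g1
  set f3 := deriv f2
  set g3 := deriv g2
  have dN : ∀ z ∈ U, HasDerivAt (fun z => f2 z * g1 z - g2 z * f1 z)
      (f3 z * g1 z - g3 z * f1 z) z := fun z hz => by
    refine HasDerivAt.congr_deriv (((df3 z hz).mul (dg2 z hz)).sub ((dg3 z hz).mul (df2 z hz))) ?_
    ring
  obtain ⟨K, hK⟩ : ∃ K, ∀ z ∈ U,
      (f2 z * g1 z - g2 z * f1 z) ^ 2 / (f1 z * g1 z) ^ 3 = K := by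
    refine exists_const_of_hasDerivAt_zero hU hUc fun z hz => ?_
    have h1 := hf' z hz
    have h2 := hg' z hz
    refine HasDerivAt.congr_deriv (((dN z hz).pow 2).div (((df2 z hz).mul (dg2 z hz)).pow 3)
      (pow_ne_zero 3 (mul_ne_zero h1 h2))) ?_
    rw [div_eq_zero_iff]
    left
    simp only [Pi.mul_apply, Pi.pow_apply]
    push_cast
    linear_combination (f2 z * g1 z - g2 z * f1 z) * (f1 z * g1 z) ^ 2 * hR z hz
  obtain ⟨z₀, hz₀⟩ := hUc.nonempty
  by_cases hK0 : K = 0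
  · have hN : ∀ z ∈ U, f2 z * g1 z - g2 z * f1 z = 0 := fun z hz => by
      have h := hK z hz
      rw [hK0, div_eq_zero_iff] at h
      rcases h with h | h
      · exact pow_eq_zero_iff two_ne_zero |>.1 h
      · exact absurd h (pow_ne_zero 3 (mul_ne_zero (hf' z hz) (hg' z hz)))
    obtain ⟨a, ha⟩ : ∃ a, ∀ z ∈ U, g1 z / f1 z = a := by
      refine exists_const_of_hasDerivAt_zero hU hUc fun z hz => ?_
      refine HasDerivAt.congr_deriv ((dg2 z hz).div (df2 z hz) (hf' z hz)) ?_
      rw [div_eq_zero_iff]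
      left
      linear_combination - hN z hz
    obtain ⟨b, hb⟩ : ∃ b, ∀ z ∈ U, g z - a * f z = b := by
      refine exists_const_of_hasDerivAt_zero hU hUc fun z hz => ?_
      refine HasDerivAt.congr_deriv ((dg1 z hz).sub ((df1 z hz).const_mul a)) ?_
      rw [← ha z hz, div_mul_cancel₀ _ (hf' z hz), sub_self]
    refine ⟨a, b, 0, 1, ?_, fun z hz => ⟨by simp, ?_⟩⟩
    · rw [← ha z₀ hz₀]
      simpa using ⟨hg' z₀ hz₀, hf' z₀ hz₀⟩
    · rw [← hb z hz]
      ring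
  · have hN : ∀ z ∈ U, f2 z * g1 z - g2 z * f1 z ≠ 0 := fun z hz h => hK0 <| by
      rw [← hK z hz, h]
      simp
    obtain ⟨p, hp⟩ : ∃ p, ∀ z ∈ U,
        f z - 2 * (f1 z ^ 2 * g1 z) / (f2 z * g1 z - g2 z * f1 z) = p := by
      refine exists_const_of_hasDerivAt_zero hU hUc fun z hz => ?_
      refine HasDerivAt.congr_deriv ((df1 z hz).sub (((((df2 z hz).pow 2).mul (dg2 z hz)).const_mul 2).div
        (dN z hz) (hN z hz))) ?_
      simp only [Pi.mul_apply, Pi.pow_apply]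
      rw [sub_eq_zero, eq_div_iff (pow_ne_zero 2 (hN z hz))]
      push_cast
      linear_combination f1 z * hR z hz
    obtain ⟨q, hq⟩ : ∃ q, ∀ z ∈ U,
        g z + 2 * (g1 z ^ 2 * f1 z) / (f2 z * g1 z - g2 z * f1 z) = q := by
      refine exists_const_of_hasDerivAt_zero hU hUc fun z hz => ?_
      refine HasDerivAt.congr_deriv ((dg1 z hz).add (((((dg2 z hz).pow 2).mul (df2 z hz)).const_mul 2).div
        (dN z hz) (hN z hz))) ?_
      simp only [Pi.mul_apply, Pi.pow_apply]
      rw [add_comm, ← eq_neg_iff_add_eq_zero, div_eq_iff (pow_ne_zero 2 (hN z hz))]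
      push_cast
      linear_combination - g1 z * hR z hz
    refine ⟨q, -(q * p) - 4 / K, 1, -p, ?_, fun z hz => ?_⟩
    · have : q * -p - (-(q * p) - 4 / K) * 1 = 4 / K := by ring
      rw [this]
      exact div_ne_zero (by norm_num) hK0
    · have h1 := hf' z hz
      have h2 := hg' z hz
      have h3 := hN z hz
      have hfp : f z - p = 2 * (f1 z ^ 2 * g1 z) / (f2 z * g1 z - g2 z * f1 z) := by
        rw [← hp z hz]; ring
      have hgq : g z - q = -(2 * (g1 z ^ 2 * f1 z) / (f2 z * g1 z - g2 z * f1 z)) := by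
        rw [← hq z hz]; ring
      have hne : f z - p ≠ 0 := by
        rw [hfp]
        exact div_ne_zero (mul_ne_zero two_ne_zero (mul_ne_zero (pow_ne_zero 2 h1) h2)) h3
      have hprod : (f z - p) * (g z - q) = -(4 / K) := by
        rw [hfp, hgq, ← hK z hz]
        generalize f2 z * g1 z - g2 z * f1 z = N at h3
        field_simp
        norm_num
      have heq : 1 * f z + -p = f z - p := by ring
      rw [heq]
      refine ⟨hne, ?_⟩
      rw [eq_div_iff hne]
      linear_combination hprod
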